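/- (Johnson–Lindenstrauss, Dasgupta–Gupta version) For any real 0 < ε < 1 and any integer n ≥ 1, let k be a positive integer such that k ≥ 4·(ε²/2 − ε³/3)^{−1}·ln n. Then for any integer d ≥ 1 and any set V of n points in ℝ^d, there exists a map f : ℝ^d → ℝ^k such that for all u, v ∈ V, (1 − ε)·‖u − v‖² ≤ ‖f(u) − f(v)‖² ≤ (1 + ε)·‖u − v‖². -/

import Mathlib

open MeasureTheory ProbabilityTheory in
lemma jl_chi (δ : ℝ) (hδ : -1 < δ) :
    ∫ z, Real.exp (δ / (2 * (1 + δ)) * z ^ 2) ∂(gaussianReal 0 1) = √(1 + δ) := by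
  have h1 : 0 < 1 + δ := by linarith
  rw [integral_gaussianReal_eq_integral_smul one_ne_zero]
  have : ∀ z : ℝ, gaussianPDFReal 0 1 z • Real.exp (δ / (2 * (1 + δ)) * z ^ 2)
      = (√(2 * Real.pi))⁻¹ * Real.exp (-(1 / (2 * (1 + δ))) * z ^ 2) := by
    intro z
    simp only [gaussianPDFReal, smul_eq_mul, NNReal.coe_one, mul_one, sub_zero]
    rw [mul_assoc, ← Real.exp_add]
    congr 2
    field_simp
    ring
  simp_rw [this]
  rw [integral_const_mul, integral_gaussian, ← Real.sqrt_inv, ← Real.sqrt_mul (by positivity)]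
  congr 1
  have := Real.pi_pos
  field_simp

open MeasureTheory ProbabilityTheory in
lemma jl_map {d : ℕ} (x : EuclideanSpace ℝ (Fin d)) (hx : ‖x‖ = 1) :
    (stdGaussian (EuclideanSpace ℝ (Fin d))).map (fun g => inner ℝ x g) = gaussianReal 0 1 := by
  have h := IsGaussian.map_eq_gaussianReal (μ := stdGaussian (EuclideanSpace ℝ (Fin d)))
    (innerSL ℝ x)
  rw [integral_strongDual_stdGaussian, variance_dual_stdGaussian, innerSL_apply_norm, hx] at h
  simpa using h

open MeasureTheory ProbabilityTheory in
lemma jl_mgf {d : ℕ} (k : ℕ) (x : EuclideanSpace ℝ (Fin d)) (hx : ‖x‖ = 1) (δ : ℝ) (hδ : -1 < δ) :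
    ∫ g, Real.exp (δ / (2 * (1 + δ)) * (∑ i : Fin k, (inner ℝ x (g i)) ^ 2 - (1 + δ) * k))
      ∂(Measure.pi fun _ : Fin k => stdGaussian (EuclideanSpace ℝ (Fin d)))
      = (√(1 + δ) * Real.exp (-(δ / 2))) ^ k := by
  have h1 : 0 < 1 + δ := by linarith
  have : ∀ g : Fin k → EuclideanSpace ℝ (Fin d),
      Real.exp (δ / (2 * (1 + δ)) * (∑ i : Fin k, (inner ℝ x (g i)) ^ 2 - (1 + δ) * k))
      = ∏ i : Fin k, (Real.exp (-(δ / 2)) * Real.exp (δ / (2 * (1 + δ)) * (inner ℝ x (g i)) ^ 2)) := by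
    intro g
    simp_rw [← Real.exp_add]
    rw [← Real.exp_sum]
    congr 1
    rw [Finset.sum_add_distrib, ← Finset.mul_sum]
    simp
    field_simp
    ring
  simp_rw [this]
  rw [integral_fintype_prod_eq_pow (ι := Fin k) (fun y : EuclideanSpace ℝ (Fin d) =>
    Real.exp (-(δ / 2)) * Real.exp (δ / (2 * (1 + δ)) * (inner ℝ x y) ^ 2))]
  rw [integral_const_mul, ← jl_chi δ hδ, ← jl_map x hx,
    integral_map (by fun_prop) (by fun_prop), mul_comm]
  simp

lemma jl_log (δ : ℝ) (hδ : -1 < δ) : Real.log (1 + δ) ≤ δ - δ ^ 2 / 2 + δ ^ 3 / 3 := by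
  have hd : ∀ y : ℝ, -1 < y → HasDerivAt
      (fun y => y - y ^ 2 / 2 + y ^ 3 / 3 - Real.log (1 + y)) (y ^ 3 / (1 + y)) y := by
    intro y hy
    have h1 : 1 + y ≠ 0 := by linarith
    have := ((((hasDerivAt_id y).sub ((hasDerivAt_pow 2 y).div_const 2)).add
      ((hasDerivAt_pow 3 y).div_const 3)).sub (((hasDerivAt_id y).const_add 1).log h1))
    refine HasDerivAt.congr_deriv this ?_
    simp only [id_eq]
    push_cast
    field_simp
    ring
  rcases le_total 0 δ with h | h
  · have : MonotoneOn (fun y => y - y ^ 2 / 2 + y ^ 3 / 3 - Real.log (1 + y)) (Set.Icc 0 δ) := by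
      apply monotoneOn_of_deriv_nonneg (convex_Icc _ _)
      · intro y hy
        exact (hd y (by linarith [hy.1])).continuousAt.continuousWithinAt
      · intro y hy
        rw [interior_Icc] at hy
        exact (hd y (by linarith [hy.1])).differentiableAt.differentiableWithinAt
      · intro y hy
        rw [interior_Icc] at hy
        rw [(hd y (by linarith [hy.1])).deriv]
        have := hy.1
        positivity
    have := this (Set.left_mem_Icc.2 h) (Set.right_mem_Icc.2 h) h
    simp at this
    linarith
  · have : AntitoneOn (fun y => y - y ^ 2 / 2 + y ^ 3 / 3 - Real.log (1 + y)) (Set.Icc δ 0) := by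
      apply antitoneOn_of_deriv_nonpos (convex_Icc _ _)
      · intro y hy
        exact (hd y (by linarith [hy.1])).continuousAt.continuousWithinAt
      · intro y hy
        rw [interior_Icc] at hy
        exact (hd y (by linarith [hy.1])).differentiableAt.differentiableWithinAt
      · intro y hy
        rw [interior_Icc] at hy
        rw [(hd y (by linarith [hy.1])).deriv]
        apply div_nonpos_of_nonpos_of_nonneg
        · exact Odd.pow_nonpos (by decide) hy.2.le
        · linarith [hy.1]
    have := this (Set.left_mem_Icc.2 h) (Set.right_mem_Icc.2 h) h
    simp at this
    linarith

lemma jl_bound (ε δ : ℝ) (hε0 : 0 < ε) (hε1 : ε < 1) (hδ : δ = ε ∨ δ = -ε) (n k : ℕ) (hn : 1 ≤ n)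
    (hkn : (k : ℝ) ≥ 4 * (ε ^ 2 / 2 - ε ^ 3 / 3)⁻¹ * Real.log n) :
    (√(1 + δ) * Real.exp (-(δ / 2))) ^ k ≤ 1 / (n : ℝ) ^ 2 := by
  have h1 : -1 < δ := by rcases hδ with h | h <;> linarith
  have hc : 0 < ε ^ 2 / 2 - ε ^ 3 / 3 := by
    have : 0 < ε ^ 2 * (1 / 2 - ε / 3) := mul_pos (by positivity) (by linarith)
    linarith
  have hn0 : (0 : ℝ) < n := by exact_mod_cast hn
  have hl := jl_log δ h1
  have hs : √(1 + δ) = Real.exp (Real.log (1 + δ) / 2) := by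
    rw [Real.exp_half, Real.exp_log (by linarith)]
  have he : δ - δ ^ 2 / 2 + δ ^ 3 / 3 ≤ δ - (ε ^ 2 / 2 - ε ^ 3 / 3) := by
    have : 0 < ε ^ 3 := by positivity
    rcases hδ with h | h <;> subst h <;> nlinarith
  have hk2 : 4 * Real.log n ≤ k * (ε ^ 2 / 2 - ε ^ 3 / 3) := by
    have := mul_le_mul_of_nonneg_right hkn hc.le
    have h3 : 4 * (ε ^ 2 / 2 - ε ^ 3 / 3)⁻¹ * Real.log n * (ε ^ 2 / 2 - ε ^ 3 / 3)
        = 4 * Real.log n := by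
      rw [mul_right_comm, mul_assoc 4, inv_mul_cancel₀ hc.ne', mul_one]
    linarith
  have hn2 : 1 / (n : ℝ) ^ 2 = Real.exp (-(2 * Real.log n)) := by
    rw [Real.exp_neg, two_mul, Real.exp_add, Real.exp_log hn0]
    field_simp
  rw [hs, ← Real.exp_add, ← Real.exp_nat_mul, hn2, Real.exp_le_exp]
  have : (k : ℝ) * (Real.log (1 + δ) / 2 + -(δ / 2)) ≤ k * (-(ε ^ 2 / 2 - ε ^ 3 / 3) / 2) :=
    mul_le_mul_of_nonneg_left (by linarith) (Nat.cast_nonneg k)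
  linarith

/-- Johnson–Lindenstrauss lemma (Dasgupta–Gupta version): for any `0 < ε < 1`
and any integer `n ≥ 1`, if `k` is a positive integer with
`k ≥ 4 (ε²/2 - ε³/3)⁻¹ ln n`, then for any set `V` of `n` points in `ℝ^d`
there is a map `f : ℝ^d → ℝ^k` such that for all `u, v ∈ V`,
`(1-ε)‖u-v‖² ≤ ‖f u - f v‖² ≤ (1+ε)‖u-v‖²`. -/
theorem johnson_lindenstrauss_dasgupta_gupta
    (ε : ℝ) (hε0 : 0 < ε) (hε1 : ε < 1)
    (n : ℕ) (hn : 1 ≤ n)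
    (k : ℕ) (hk : 0 < k)
    (hkn : (k : ℝ) ≥ 4 * (ε ^ 2 / 2 - ε ^ 3 / 3)⁻¹ * Real.log n)
    (d : ℕ) (hd : 1 ≤ d)
    (V : Finset (EuclideanSpace ℝ (Fin d))) (hV : V.card = n) :
    ∃ f : EuclideanSpace ℝ (Fin d) → EuclideanSpace ℝ (Fin k),
      ∀ u ∈ V, ∀ v ∈ V,
        (1 - ε) * ‖u - v‖ ^ 2 ≤ ‖f u - f v‖ ^ 2 ∧
        ‖f u - f v‖ ^ 2 ≤ (1 + ε) * ‖u - v‖ ^ 2 := by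
  classical
  set μ := MeasureTheory.Measure.pi fun _ : Fin k =>
    ProbabilityTheory.stdGaussian (EuclideanSpace ℝ (Fin d)) with hμ
  let T : ℝ → EuclideanSpace ℝ (Fin d) → (Fin k → EuclideanSpace ℝ (Fin d)) → ℝ := fun δ x g =>
    Real.exp (δ / (2 * (1 + δ)) * (∑ i : Fin k, (inner ℝ x (g i)) ^ 2 - (1 + δ) * k))
  let N : EuclideanSpace ℝ (Fin d) → EuclideanSpace ℝ (Fin d) := fun x => ‖x‖⁻¹ • x
  have hN : ∀ x, x ≠ 0 → ‖N x‖ = 1 := fun x hx => norm_smul_inv_norm (𝕜 := ℝ) hx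
  have hTi : ∀ δ x, -1 < δ → ‖x‖ = 1 → MeasureTheory.Integrable (T δ x) μ := by
    intro δ x hδ hx
    by_contra hc
    have h := MeasureTheory.integral_undef hc
    have h2 := jl_mgf k x hx δ hδ
    have h3 : 0 < (√(1 + δ) * Real.exp (-(δ / 2))) ^ k := by
      have : 0 < 1 + δ := by linarith
      positivity
    have h4 : ∫ g, T δ x g ∂μ = (√(1 + δ) * Real.exp (-(δ / 2))) ^ k := h2
    linarith
  have hTb : ∀ δ x, (δ = ε ∨ δ = -ε) → ‖x‖ = 1 → ∫ g, T δ x g ∂μ ≤ 1 / (n : ℝ) ^ 2 := by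
    intro δ x hδ hx
    have h2 := jl_mgf k x hx δ (by rcases hδ with h | h <;> linarith)
    exact h2.trans_le (jl_bound ε δ hε0 hε1 hδ n k hn hkn)
  have hTn : ∀ δ x g, T δ (N (-x)) g = T δ (N x) g := by
    intro δ x g
    simp [T, N]
  have hTp : ∀ δ x g, 0 < T δ x g := fun δ x g => Real.exp_pos _
  let F : (Fin k → EuclideanSpace ℝ (Fin d)) → ℝ := fun g =>
    ∑ p ∈ V.offDiag, (T ε (N (p.1 - p.2)) g + T (-ε) (N (p.1 - p.2)) g)
  have hne : ∀ p ∈ V.offDiag, ‖N (p.1 - p.2)‖ = 1 := by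
    intro p hp
    exact hN _ (sub_ne_zero.2 (Finset.mem_offDiag.1 hp).2.2)
  have hi : ∀ p ∈ V.offDiag, MeasureTheory.Integrable
      (fun g => T ε (N (p.1 - p.2)) g + T (-ε) (N (p.1 - p.2)) g) μ := fun p hp =>
    (hTi _ _ (by linarith) (hne p hp)).add (hTi _ _ (by linarith) (hne p hp))
  have hFi : MeasureTheory.Integrable F μ := MeasureTheory.integrable_finsetSum _ hi
  have hn0 : (0 : ℝ) < n := by exact_mod_cast hn
  have hF : ∫ g, F g ∂μ < 2 := by
    have : ∫ g, F g ∂μ ≤ ∑ p ∈ V.offDiag, (1 / (n : ℝ) ^ 2 + 1 / (n : ℝ) ^ 2) := by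
      rw [MeasureTheory.integral_finsetSum _ hi]
      refine Finset.sum_le_sum fun p hp => ?_
      rw [MeasureTheory.integral_add (hTi _ _ (by linarith) (hne p hp))
        (hTi _ _ (by linarith) (hne p hp))]
      exact add_le_add (hTb _ _ (Or.inl rfl) (hne p hp)) (hTb _ _ (Or.inr rfl) (hne p hp))
    refine this.trans_lt ?_
    rw [Finset.sum_const, Finset.offDiag_card, hV, nsmul_eq_mul,
      Nat.cast_sub (Nat.le_mul_self n)]
    push_cast
    rw [← add_div, mul_div_assoc', div_lt_iff₀ (by positivity)]
    nlinarith
  obtain ⟨g, hg⟩ := MeasureTheory.exists_le_integral hFi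
  have hg2 : F g < 2 := hg.trans_lt hF
  have hpair : ∀ u ∈ V, ∀ v ∈ V, u ≠ v → T ε (N (u - v)) g < 1 ∧ T (-ε) (N (u - v)) g < 1 := by
    intro u hu v hv huv
    have hsub : ({(u, v), (v, u)} : Finset _) ⊆ V.offDiag := by
      intro p hp
      simp only [Finset.mem_insert, Finset.mem_singleton] at hp
      rcases hp with rfl | rfl
      · exact Finset.mem_offDiag.2 ⟨hu, hv, huv⟩
      · exact Finset.mem_offDiag.2 ⟨hv, hu, huv.symm⟩
    have h := Finset.sum_le_sum_of_subset_of_nonneg hsub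
      (f := fun p => T ε (N (p.1 - p.2)) g + T (-ε) (N (p.1 - p.2)) g)
      (fun p _ _ => (add_pos (hTp _ _ _) (hTp _ _ _)).le)
    rw [Finset.sum_pair (by simp [huv])] at h
    have h' := h.trans_lt hg2
    simp only at h'
    rw [← neg_sub u v, hTn, hTn] at h'
    have a := hTp ε (N (u - v)) g
    have b := hTp (-ε) (N (u - v)) g
    constructor <;> linarith
  have hk0 : (0 : ℝ) < k := by exact_mod_cast hk
  refine ⟨fun u => WithLp.toLp 2 fun i => inner ℝ u (g i) / √k, fun u hu v hv => ?_⟩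
  by_cases huv : u = v
  · subst huv; simp
  have hx : 0 < ‖u - v‖ := norm_pos_iff.2 (sub_ne_zero.2 huv)
  have hS : ∑ i : Fin k, (inner ℝ (N (u - v)) (g i)) ^ 2
      = (∑ i : Fin k, (inner ℝ (u - v) (g i)) ^ 2) / ‖u - v‖ ^ 2 := by
    rw [Finset.sum_div]
    refine Finset.sum_congr rfl fun i _ => ?_
    simp only [N, real_inner_smul_left]
    field_simp
  have hf : ‖(WithLp.toLp 2 fun i => inner ℝ u (g i) / √k : EuclideanSpace ℝ (Fin k))
      - WithLp.toLp 2 fun i => inner ℝ v (g i) / √k‖ ^ 2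
      = (∑ i : Fin k, (inner ℝ (u - v) (g i)) ^ 2) / k := by
    rw [EuclideanSpace.real_norm_sq_eq, Finset.sum_div]
    refine Finset.sum_congr rfl fun i _ => ?_
    simp only [PiLp.sub_apply, inner_sub_left]
    rw [← sub_div, div_pow, Real.sq_sqrt hk0.le]
  rw [hf]
  set S := ∑ i : Fin k, (inner ℝ (u - v) (g i)) ^ 2
  obtain ⟨ha, hb⟩ := hpair u hu v hv huv
  simp only [T, Real.exp_lt_one_iff, hS] at ha hb
  have ha' : S / ‖u - v‖ ^ 2 - (1 + ε) * k < 0 := by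
    by_contra hc
    have : 0 ≤ ε / (2 * (1 + ε)) := by positivity
    have := mul_nonneg this (not_lt.1 hc)
    linarith
  have hb' : 0 < S / ‖u - v‖ ^ 2 - (1 + -ε) * k := by
    by_contra hc
    have : -ε / (2 * (1 + -ε)) ≤ 0 :=
      div_nonpos_of_nonpos_of_nonneg (by linarith) (by linarith)
    have := mul_nonneg_of_nonpos_of_nonpos this (not_lt.1 hc)
    linarith
  have hx2 : 0 < ‖u - v‖ ^ 2 := by positivity
  constructor
  · rw [le_div_iff₀ hk0]
    have : (1 + -ε) * k < S / ‖u - v‖ ^ 2 := by linarith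
    rw [lt_div_iff₀ hx2] at this
    linarith
  · rw [div_le_iff₀ hk0]
    have : S / ‖u - v‖ ^ 2 < (1 + ε) * k := by linarith
    rw [div_lt_iff₀ hx2] at this
    linarith
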